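/- Let (Λ, d) be a row-finite k-graph without sources and let {S_f : f ∈ Λ} be a Kumjian–Pask family in a unital C*-algebra B. Then the map f ↦ S_f is a representation of the semigroupoid Λ in B: each S_f is a partial isometry; S_f S_g = S_{fg} if s(f) = r(g) and S_f S_g = 0 otherwise; the projections Q_f = S_f* S_f and P_g = S_g S_g* all commute amongst themselves; P_f P_g = 0 whenever f ⊥ g; and Q_f P_g = P_g whenever s(f) = r(g). -/

import Mathlib

/-!
The initial projection of `S f` is the vertex projection `S (s f)`. Vertex projections are equal or
orthogonal, and `S (r g)` is a left unit for `S g`, so only products of two final projections need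
work.

By (KP4) the projection `S v` is the sum of the projections `P h` with `h ∈ Λ^n(v)`. Projections
whose sum is again a projection are pairwise orthogonal, because a vanishing sum of elements `a* a`
has vanishing terms; hence `P f * P g = 0` for distinct `f`, `g` of the same degree. Sandwiching
(KP4) at `s f` between `S f` and its adjoint gives `P f = ∑ P (f a)` over `a ∈ Λ^n(s f)`. Taking
`n = d g`, and symmetrically for `g`, writes `P f` and `P g` as sums of final projections of the
common degree `d f + d g`, so that `P f * P g` is the sum of `P m` over the common multiples `m` of
that degree: it is self-adjoint, and it vanishes if `f ⊥ g`.
-/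

universe u

/-- A semigroupoid: a set with a partially defined associative operation
(Exel, Definition 2.1). -/
structure Semigroupoid (Λ : Type u) where
  /-- the set of composable pairs -/
  D2 : Λ → Λ → Prop
  /-- the (partially meaningful) multiplication -/
  mul : Λ → Λ → Λ
  assoc₁ : ∀ f g h, D2 f g → D2 g h →
    D2 (mul f g) h ∧ D2 f (mul g h) ∧ mul (mul f g) h = mul f (mul g h)
  assoc₂ : ∀ f g h, D2 f g → D2 (mul f g) h →
    D2 g h ∧ D2 f (mul g h) ∧ mul (mul f g) h = mul f (mul g h)
  assoc₃ : ∀ f g h, D2 g h → D2 f (mul g h) →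
    D2 f g ∧ D2 (mul f g) h ∧ mul (mul f g) h = mul f (mul g h)

namespace Semigroupoid

variable {Λ : Type u} (G : Semigroupoid Λ)

/-- `f` divides `g` : either `f = g` or `f h = g` for some `h`. -/
def Divides (f g : Λ) : Prop := f = g ∨ ∃ h, G.D2 f h ∧ G.mul f h = g

/-- `f` and `g` intersect: they admit a common multiple. -/
def Intersects (f g : Λ) : Prop := ∃ m, G.Divides f m ∧ G.Divides g m

/-- `f` and `g` are disjoint: no common multiple. -/
def Disjnt (f g : Λ) : Prop := ¬ G.Intersects f g

/-- `Λ^f`, the set of elements composable with `f` on the right. -/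
def lam (f : Λ) : Set Λ := {g | G.D2 f g}

/-- A spring: an element `f` with `Λ^f = ∅`. -/
def IsSpring (f : Λ) : Prop := ∀ g, ¬ G.D2 f g

/-- `H` is a covering of `X`: `H ⊆ X` and every element of `X` intersects some element of `H`. -/
def IsCovering (H X : Set Λ) : Prop := H ⊆ X ∧ ∀ f ∈ X, ∃ h ∈ H, G.Intersects f h

/-- `H` is a partition of `X`: a covering whose elements are pairwise disjoint. -/
def IsPartition (H X : Set Λ) : Prop :=
  G.IsCovering H X ∧ ∀ h₁ ∈ H, ∀ h₂ ∈ H, h₁ ≠ h₂ → G.Disjnt h₁ h₂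

/-- `Λ^{F,G'} = (⋂_{f∈F} Λ^f) ∩ (⋂_{g∈G'} (Λ \ Λ^g))`. -/
def lamFG (F G' : Finset Λ) : Set Λ :=
  {h | (∀ f ∈ F, G.D2 f h) ∧ ∀ g ∈ G', ¬ G.D2 g h}

end Semigroupoid

section Repn

variable {Λ : Type u} {B : Type*} [Ring B] [StarRing B]

/-- initial projection -/
def QQ (S : Λ → B) (f : Λ) : B := star (S f) * S f

/-- final projection -/
def PP (S : Λ → B) (f : Λ) : B := S f * star (S f)

/-- A representation of a semigroupoid in a unital C*-algebra (Exel, Definition 4.1). -/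
structure IsRepn (G : Semigroupoid Λ) (S : Λ → B) : Prop where
  partialIsometry : ∀ f, S f * star (S f) * S f = S f
  map_comp : ∀ f g, G.D2 f g → S f * S g = S (G.mul f g)
  map_ncomp : ∀ f g, ¬ G.D2 f g → S f * S g = 0
  commQQ : ∀ f g, Commute (QQ S f) (QQ S g)
  commQP : ∀ f g, Commute (QQ S f) (PP S g)
  commPP : ∀ f g, Commute (PP S f) (PP S g)
  orthPP : ∀ f g, G.Disjnt f g → PP S f * PP S g = 0
  QdomP : ∀ f g, G.D2 f g → QQ S f * PP S g = PP S g

/-- the product `∏_{f ∈ F} T f` (of pairwise commuting elements), via a choice of order. -/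
noncomputable def fprod (F : Finset Λ) (T : Λ → B) : B := (F.toList.map T).prod

/-- the supremum `⋁_{h ∈ H} PP S h` of commuting final projections,
`P ∨ Q = P + Q - P Q`, i.e. `1 - ∏ (1 - P h)`. -/
noncomputable def joinP (H : Finset Λ) (S : Λ → B) : B := 1 - fprod H (fun h => 1 - PP S h)

/-- Tight representation (Exel, Definition 4.5). -/
def IsTight (G : Semigroupoid Λ) (S : Λ → B) : Prop :=
  ∀ (F G' H : Finset Λ), G.IsCovering ↑H (G.lamFG F G') →
    joinP H S = fprod F (QQ S) * fprod G' (fun g => 1 - QQ S g)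

end Repn
/-- A small category, viewed as a semigroupoid whose elements are all its morphisms:
`(f,g)` is composable iff `s f = r g`; objects are identified with identity morphisms. -/
structure CatSemigroupoid (Λ : Type u) extends Semigroupoid Λ where
  /-- source (domain) of a morphism, as an identity morphism -/
  src : Λ → Λ
  /-- range (codomain) of a morphism, as an identity morphism -/
  rng : Λ → Λ
  /-- the morphisms which are (identities on) objects -/
  IsObj : Λ → Prop
  obj_src : ∀ f, IsObj (src f)
  obj_rng : ∀ f, IsObj (rng f)
  src_obj : ∀ v, IsObj v → src v = v
  rng_obj : ∀ v, IsObj v → rng v = v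
  comp_iff : ∀ f g, D2 f g ↔ src f = rng g
  mul_src : ∀ f, mul f (src f) = f
  rng_mul' : ∀ f, mul (rng f) f = f
  src_mul : ∀ f g, D2 f g → src (mul f g) = src g
  rng_mul : ∀ f g, D2 f g → rng (mul f g) = rng f

namespace CatSemigroupoid

variable {Λ : Type u} (C : CatSemigroupoid Λ)

/-- for an object `v`, `Λ^v = {g : r g = v}`. -/
def lamObj (v : Λ) : Set Λ := {g | C.rng g = v}

end CatSemigroupoid
/-- A `k`-graph `(Λ, d)`: a small category (viewed as a semigroupoid) together with a degree
functor `d : Λ → ℕ^k` satisfying the unique factorization property. -/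
structure KGraph (k : ℕ) (Λ : Type u) extends CatSemigroupoid Λ where
  d : Λ → (Fin k → ℕ)
  d_mul : ∀ f g, D2 f g → d (mul f g) = d f + d g
  factor : ∀ f n m, d f = n + m →
    ∃! p : Λ × Λ, D2 p.1 p.2 ∧ d p.1 = n ∧ d p.2 = m ∧ mul p.1 p.2 = f

namespace KGraph

variable {k : ℕ} {Λ : Type u} (G : KGraph k Λ)

/-- `Λ^n(v) = {f : r f = v, d f = n}`. -/
def lamN (v : Λ) (n : Fin k → ℕ) : Set Λ := {f | G.rng f = v ∧ G.d f = n}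

/-- `(Λ, d)` is row-finite and has no sources: `0 < |Λ^n(v)| < ∞` for every object `v`
and every `n ∈ ℕ^k`. -/
def RowFiniteNoSources : Prop :=
  ∀ v, G.IsObj v → ∀ n : Fin k → ℕ, (G.lamN v n).Finite ∧ (G.lamN v n).Nonempty

end KGraph

section KP

variable {k : ℕ} {Λ : Type u} {B : Type*} [Ring B] [StarRing B]

/-- A Kumjian–Pask family for a row-finite `k`-graph without sources. -/
structure IsKPFamily (G : KGraph k Λ) (S : Λ → B) : Prop where
  partialIsometry : ∀ f, S f * star (S f) * S f = S f
  kp1_proj : ∀ v, G.IsObj v → star (S v) = S v ∧ S v * S v = S v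
  kp1_orth : ∀ u v, G.IsObj u → G.IsObj v → u ≠ v → S u * S v = 0
  kp2 : ∀ f g, G.D2 f g → S (G.mul f g) = S f * S g
  kp3 : ∀ f, star (S f) * S f = S (G.src f)
  kp4 : ∀ v, G.IsObj v → ∀ (n : Fin k → ℕ) (hfin : (G.lamN v n).Finite),
    S v = ∑ f ∈ hfin.toFinset, S f * star (S f)

end KP

section PositiveDefiniteStar

/-- The involution of a star ring is positive definite if a finite sum of elements `star a * a`
vanishes only when every `a` does. It forces projections with an idempotent sum to be pairwise
orthogonal. -/
class PositiveDefiniteStar (R : Type*) [NonUnitalNonAssocSemiring R] [Star R] : Prop where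
  eq_zero_of_sum_fin : ∀ (n : ℕ) (a : Fin n → R), ∑ i, star (a i) * a i = 0 → ∀ i, a i = 0

instance PositiveDefiniteStar.of_nonUnitalCStarAlgebra {R : Type*} [NonUnitalCStarAlgebra R] :
    PositiveDefiniteStar R where
  eq_zero_of_sum_fin n a hsum i := by
    let _ : PartialOrder R := CStarAlgebra.spectralOrder R
    have : StarOrderedRing R := CStarAlgebra.spectralOrderedRing R
    have hterms := (Finset.sum_eq_zero_iff_of_nonneg fun j _ => star_mul_self_nonneg (a j)).1 hsum
    exact (CStarRing.star_mul_self_eq_zero_iff (a i)).1 (hterms i (Finset.mem_univ i))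

variable {R ι : Type*} {s : Finset ι}

lemma eq_zero_of_sum_star_mul_self_eq_zero [NonUnitalNonAssocSemiring R] [Star R]
    [PositiveDefiniteStar R] {a : ι → R} (hsum : ∑ i ∈ s, star (a i) * a i = 0) {i : ι}
    (hi : i ∈ s) : a i = 0 := by
  have hsum_fin : ∑ j, star (a (s.equivFin.symm j)) * a (s.equivFin.symm j) = 0 := by
    rw [s.equivFin.symm.sum_comp fun j : s => star (a j) * a j,
      s.sum_coe_sort fun j => star (a j) * a j, hsum]
  simpa using PositiveDefiniteStar.eq_zero_of_sum_fin _ _ hsum_fin (s.equivFin ⟨i, hi⟩)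

lemma isStarProjection_mul_star_self [Semigroup R] [StarMul R] {a : R}
    (ha : a * star a * a = a) : IsStarProjection (a * star a) where
  isIdempotentElem := by rw [IsIdempotentElem, ← mul_assoc, ha]
  isSelfAdjoint := .mul_star_self a

lemma star_mul_mul_mul_of_isStarProjection [Semigroup R] [StarMul R] {p : R}
    (hp : IsStarProjection p) (x : R) : star (p * x) * (p * x) = star x * p * x := by
  rw [star_mul, hp.isSelfAdjoint.star_eq, mul_assoc, ← mul_assoc p, hp.isIdempotentElem.eq,
    mul_assoc]

variable [Ring R] [StarRing R] [PositiveDefiniteStar R] {p : ι → R}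

lemma mul_eq_zero_of_star_mul_sum_mul_eq_zero (hp : ∀ i ∈ s, IsStarProjection (p i)) {x : R}
    (hx : star x * (∑ i ∈ s, p i) * x = 0) {i : ι} (hi : i ∈ s) : p i * x = 0 := by
  refine eq_zero_of_sum_star_mul_self_eq_zero (a := fun j => p j * x) ?_ hi
  rw [← hx, Finset.mul_sum, Finset.sum_mul]
  exact Finset.sum_congr rfl fun j hj => star_mul_mul_mul_of_isStarProjection (hp j hj) x

lemma mul_sum_eq_self_of_isIdempotentElem_sum (hp : ∀ i ∈ s, IsStarProjection (p i))
    (hsum : IsIdempotentElem (∑ i ∈ s, p i)) {i : ι} (hi : i ∈ s) :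
    p i * ∑ j ∈ s, p j = p i := by
  have hcompl : p i * (1 - ∑ j ∈ s, p j) = 0 :=
    mul_eq_zero_of_star_mul_sum_mul_eq_zero hp
      (by rw [mul_assoc, hsum.mul_one_sub_self, mul_zero]) hi
  rw [mul_sub, mul_one, sub_eq_zero] at hcompl
  exact hcompl.symm

lemma mul_eq_zero_of_isIdempotentElem_sum (hp : ∀ i ∈ s, IsStarProjection (p i))
    (hsum : IsIdempotentElem (∑ i ∈ s, p i)) {i j : ι} (hi : i ∈ s) (hj : j ∈ s) (hij : i ≠ j) :
    p i * p j = 0 := by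
  classical
  have hpj := hp j hj
  have herase : p j * ∑ l ∈ s.erase j, p l = 0 := by
    rw [Finset.sum_erase_eq_sub hj, mul_sub, mul_sum_eq_self_of_isIdempotentElem_sum hp hsum hj,
      hpj.isIdempotentElem.eq, sub_self]
  refine mul_eq_zero_of_star_mul_sum_mul_eq_zero (s := s.erase j)
    (fun l hl => hp l (Finset.mem_of_mem_erase hl)) ?_ (Finset.mem_erase.2 ⟨hij, hi⟩)
  rw [hpj.isSelfAdjoint.star_eq, herase, zero_mul]

end PositiveDefiniteStar

lemma Semigroupoid.intersects_of_mul_eq_mul {Λ : Type u} {G : Semigroupoid Λ} {f g a b : Λ}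
    (hfa : G.D2 f a) (hgb : G.D2 g b) (hab : G.mul f a = G.mul g b) : G.Intersects f g :=
  ⟨G.mul f a, .inr ⟨a, hfa, rfl⟩, .inr ⟨b, hgb, hab.symm⟩⟩

namespace CatSemigroupoid

variable {Λ : Type u} (C : CatSemigroupoid Λ)

lemma D2_self_src (f : Λ) : C.D2 f (C.src f) :=
  (C.comp_iff _ _).2 (C.rng_obj _ (C.obj_src f)).symm

lemma D2_rng_self (f : Λ) : C.D2 (C.rng f) f :=
  (C.comp_iff _ _).2 (C.src_obj _ (C.obj_rng f))

end CatSemigroupoid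

namespace KGraph

variable {k : ℕ} {Λ : Type u} {G : KGraph k Λ}

/-- `(Λ, d)` is row-finite: every object receives finitely many morphisms of each degree. Sources
are allowed. -/
def RowFinite (G : KGraph k Λ) : Prop :=
  ∀ v, G.IsObj v → ∀ n : Fin k → ℕ, (G.lamN v n).Finite

lemma RowFiniteNoSources.rowFinite (hG : G.RowFiniteNoSources) : G.RowFinite :=
  fun v hv n => (hG v hv n).1

lemma mem_lamN_src {f a : Λ} {n : Fin k → ℕ} :
    a ∈ G.lamN (G.src f) n ↔ G.D2 f a ∧ G.d a = n := by
  rw [G.comp_iff, eq_comm]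
  rfl

lemma d_mul_eq_d_mul {f g a b : Λ} (ha : a ∈ G.lamN (G.src f) (G.d g))
    (hb : b ∈ G.lamN (G.src g) (G.d f)) : G.d (G.mul f a) = G.d (G.mul g b) := by
  obtain ⟨hfa, hda⟩ := mem_lamN_src.1 ha
  obtain ⟨hgb, hdb⟩ := mem_lamN_src.1 hb
  rw [G.d_mul f a hfa, G.d_mul g b hgb, hda, hdb, add_comm]

end KGraph

namespace IsKPFamily

variable {k : ℕ} {Λ : Type u} {B : Type*} [Ring B] [StarRing B] {G : KGraph k Λ} {S : Λ → B}
  {f g u v : Λ}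

lemma isStarProjection_obj (hS : IsKPFamily G S) (hv : G.IsObj v) : IsStarProjection (S v) :=
  ⟨(hS.kp1_proj v hv).2, (hS.kp1_proj v hv).1⟩

lemma isStarProjection_PP (hS : IsKPFamily G S) (f : Λ) : IsStarProjection (PP S f) :=
  isStarProjection_mul_star_self (hS.partialIsometry f)

lemma map_mul_src (hS : IsKPFamily G S) (f : Λ) : S f * S (G.src f) = S f := by
  rw [← hS.kp2 _ _ (G.D2_self_src f), G.mul_src]

lemma rng_mul_map (hS : IsKPFamily G S) (f : Λ) : S (G.rng f) * S f = S f := by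
  rw [← hS.kp2 _ _ (G.D2_rng_self f), G.rng_mul']

lemma map_mul_map_eq_zero (hS : IsKPFamily G S) (hfg : ¬ G.D2 f g) : S f * S g = 0 := by
  have hne : G.src f ≠ G.rng g := fun h => hfg ((G.comp_iff f g).2 h)
  calc S f * S g = S f * (S (G.src f) * S (G.rng g)) * S g := by
        rw [← mul_assoc, hS.map_mul_src, mul_assoc, hS.rng_mul_map]
    _ = 0 := by rw [hS.kp1_orth _ _ (G.obj_src f) (G.obj_rng g) hne, mul_zero, zero_mul]

lemma commute_obj (hS : IsKPFamily G S) (hu : G.IsObj u) (hv : G.IsObj v) :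
    Commute (S u) (S v) := by
  obtain rfl | hne := eq_or_ne u v
  · exact Commute.refl (S u)
  · rw [commute_iff_eq, hS.kp1_orth u v hu hv hne, hS.kp1_orth v u hv hu hne.symm]

lemma rng_mul_PP (hS : IsKPFamily G S) (g : Λ) : S (G.rng g) * PP S g = PP S g := by
  rw [PP, ← mul_assoc, hS.rng_mul_map]

lemma PP_mul_rng (hS : IsKPFamily G S) (f : Λ) : PP S f * S (G.rng f) = PP S f := by
  have hstar := congrArg star (hS.rng_mul_PP f)
  rwa [star_mul, (hS.isStarProjection_PP f).isSelfAdjoint.star_eq,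
    (hS.isStarProjection_obj (G.obj_rng f)).isSelfAdjoint.star_eq] at hstar

lemma obj_mul_PP_eq_zero (hS : IsKPFamily G S) (hv : G.IsObj v) (hne : v ≠ G.rng g) :
    S v * PP S g = 0 := by
  rw [← hS.rng_mul_PP g, ← mul_assoc, hS.kp1_orth v _ hv (G.obj_rng g) hne, zero_mul]

lemma commute_obj_PP (hS : IsKPFamily G S) (hv : G.IsObj v) (g : Λ) :
    Commute (S v) (PP S g) := by
  have hPg := (hS.isStarProjection_PP g).isSelfAdjoint
  rw [(hS.isStarProjection_obj hv).isSelfAdjoint.commute_iff hPg]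
  obtain rfl | hne := eq_or_ne v (G.rng g)
  · rwa [hS.rng_mul_PP]
  · rw [hS.obj_mul_PP_eq_zero hv hne]
    exact .zero B

lemma PP_eq_sum_PP_mul (hS : IsKPFamily G S) (f : Λ) {n : Fin k → ℕ}
    (hfin : (G.lamN (G.src f) n).Finite) :
    PP S f = ∑ a ∈ hfin.toFinset, PP S (G.mul f a) :=
  calc PP S f = S f * S (G.src f) * star (S f) := by rw [hS.map_mul_src, PP]
    _ = ∑ a ∈ hfin.toFinset, S f * (S a * star (S a)) * star (S f) := by
        rw [hS.kp4 _ (G.obj_src f) n hfin, Finset.mul_sum, Finset.sum_mul]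
    _ = ∑ a ∈ hfin.toFinset, PP S (G.mul f a) := by
        refine Finset.sum_congr rfl fun a ha => ?_
        have hfa : G.D2 f a := (KGraph.mem_lamN_src.1 (hfin.mem_toFinset.1 ha)).1
        simp only [PP, hS.kp2 f a hfa, star_mul, mul_assoc]

variable [PositiveDefiniteStar B]

lemma PP_mul_PP_eq_zero_of_d_eq (hS : IsKPFamily G S) (hG : G.RowFinite) (hd : G.d f = G.d g)
    (hne : f ≠ g) : PP S f * PP S g = 0 := by
  by_cases hrng : G.rng f = G.rng g
  · have hfin := hG (G.rng g) (G.obj_rng g) (G.d g)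
    have hsum : S (G.rng g) = ∑ h ∈ hfin.toFinset, PP S h := hS.kp4 _ (G.obj_rng g) _ hfin
    refine mul_eq_zero_of_isIdempotentElem_sum (fun h _ => hS.isStarProjection_PP h) ?_
      (hfin.mem_toFinset.2 ⟨hrng, hd⟩) (hfin.mem_toFinset.2 ⟨rfl, rfl⟩) hne
    rw [← hsum]
    exact (hS.isStarProjection_obj (G.obj_rng g)).isIdempotentElem
  · rw [← hS.PP_mul_rng f, mul_assoc, hS.obj_mul_PP_eq_zero (G.obj_rng f) hrng, mul_zero]

open Classical in
lemma PP_mul_PP_eq_sum (hS : IsKPFamily G S) (hG : G.RowFinite) (f g : Λ) :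
    PP S f * PP S g =
      ∑ a ∈ (hG _ (G.obj_src f) (G.d g)).toFinset, ∑ b ∈ (hG _ (G.obj_src g) (G.d f)).toFinset,
        if G.mul f a = G.mul g b then PP S (G.mul f a) else 0 := by
  rw [hS.PP_eq_sum_PP_mul f (hG _ (G.obj_src f) (G.d g)),
    hS.PP_eq_sum_PP_mul g (hG _ (G.obj_src g) (G.d f)), Finset.sum_mul_sum]
  refine Finset.sum_congr rfl fun a ha => Finset.sum_congr rfl fun b hb => ?_
  split_ifs with hab
  · rw [← hab, (hS.isStarProjection_PP _).isIdempotentElem.eq]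
  · exact hS.PP_mul_PP_eq_zero_of_d_eq hG
      (KGraph.d_mul_eq_d_mul ((Set.Finite.mem_toFinset _).1 ha) ((Set.Finite.mem_toFinset _).1 hb))
      hab

lemma commute_PP (hS : IsKPFamily G S) (hG : G.RowFinite) (f g : Λ) :
    Commute (PP S f) (PP S g) := by
  have hself : ∀ h, IsSelfAdjoint (PP S h) := fun h => (hS.isStarProjection_PP h).isSelfAdjoint
  rw [(hself f).commute_iff (hself g), hS.PP_mul_PP_eq_sum hG]
  refine isSelfAdjoint_sum _ fun a _ => isSelfAdjoint_sum _ fun b _ => ?_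
  split_ifs
  · exact hself _
  · exact .zero B

lemma PP_mul_PP_eq_zero_of_disjnt (hS : IsKPFamily G S) (hG : G.RowFinite)
    (hfg : G.Disjnt f g) : PP S f * PP S g = 0 := by
  rw [hS.PP_mul_PP_eq_sum hG]
  refine Finset.sum_eq_zero fun a ha => Finset.sum_eq_zero fun b hb => if_neg fun hab => hfg ?_
  have hfa := (KGraph.mem_lamN_src.1 ((Set.Finite.mem_toFinset _).1 ha)).1
  have hgb := (KGraph.mem_lamN_src.1 ((Set.Finite.mem_toFinset _).1 hb)).1
  exact Semigroupoid.intersects_of_mul_eq_mul hfa hgb hab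

end IsKPFamily

theorem kp_isRepn_general {k : ℕ} {Λ : Type u} {B : Type*} [Ring B] [StarRing B]
    [PositiveDefiniteStar B] (G : KGraph k Λ) (hG : G.RowFinite) {S : Λ → B}
    (hS : IsKPFamily G S) : IsRepn G.toSemigroupoid S := by
  have hQ : ∀ f, QQ S f = S (G.src f) := hS.kp3
  exact
    { partialIsometry := hS.partialIsometry
      map_comp := fun f g hfg => (hS.kp2 f g hfg).symm
      map_ncomp := fun _ _ => hS.map_mul_map_eq_zero
      commQQ := fun f g => by
        simpa only [hQ] using hS.commute_obj (G.obj_src f) (G.obj_src g)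
      commQP := fun f g => by simpa only [hQ] using hS.commute_obj_PP (G.obj_src f) g
      commPP := hS.commute_PP hG
      orthPP := fun _ _ => hS.PP_mul_PP_eq_zero_of_disjnt hG
      QdomP := fun f g hfg => by rw [hQ, (G.comp_iff f g).1 hfg, hS.rng_mul_PP] }

/-- A Kumjian–Pask family is a representation of the underlying semigroupoid. -/
theorem kp_isRepn {k : ℕ} {Λ : Type u} {B : Type*} [CStarAlgebra B]
    (G : KGraph k Λ) (hrf : G.RowFiniteNoSources)
    {S : Λ → B} (hS : IsKPFamily G S) :
    IsRepn G.toSemigroupoid S :=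
  kp_isRepn_general G hrf.rowFinite hS
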